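/- Let T : ℝ[x] → ℝ[x] be a linear operator, let (B_n)_{n≥0} and (B̃_n)_{n≥0} be simple bases, and let (a_n)_{n≥0} and (ã_n)_{n≥0} be sequences of real numbers such that T(B_n) = a_n · B_n and T(B̃_n) = ã_n · B̃_n for every n ∈ ℕ. Then a_n = ã_n for every n ∈ ℕ. -/

import Mathlib

/-!
The operator `T` is upper triangular for the filtration of `ℝ[x]` by degree, since each `B n` is an
eigenvector of degree `n` (`degree_map_lt`). Subtracting the multiple of `B n` with the same
`n`-th coefficient from `B' n` leaves a polynomial of degree `< n`, whose image again has degree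
`< n`. The `n`-th coefficient of that image is `(a' n - a n)` times the nonzero leading
coefficient of `B' n`, so `a n = a' n`.
-/

open Polynomial

lemma coeff_ne_zero_of_degree_eq {p : Polynomial ℝ} {n : ℕ} (h : p.degree = n) :
    p.coeff n ≠ 0 :=
  coeff_ne_zero_of_eq_degree h

lemma degree_sub_smul_lt {p b : Polynomial ℝ} {n : ℕ} (hp : p.degree < (n + 1 : ℕ))
    (hb : b.degree = n) : (p - (p.coeff n / b.coeff n) • b).degree < n := by
  have hb0 := coeff_ne_zero_of_degree_eq hb
  rw [degree_lt_iff_coeff_zero] at hp ⊢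
  intro m hm
  rcases hm.eq_or_lt with rfl | hlt
  · simp [div_mul_cancel₀ _ hb0]
  · have h2 : b.coeff m = 0 := coeff_eq_zero_of_degree_lt (by rw [hb]; exact_mod_cast hlt)
    simp [hp m hlt, h2]

/-- An operator with an eigenvector in each degree does not raise degrees. -/
lemma degree_map_lt (T : Polynomial ℝ →ₗ[ℝ] Polynomial ℝ) (B : ℕ → Polynomial ℝ)
    (hB : ∀ n : ℕ, (B n).degree = n) (a : ℕ → ℝ) (hT : ∀ n : ℕ, T (B n) = a n • B n)
    (n : ℕ) : ∀ p : Polynomial ℝ, p.degree < n → (T p).degree < n := by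
  induction n with
  | zero =>
    intro p hp
    have : p = 0 := by
      rw [degree_lt_iff_coeff_zero] at hp
      ext m
      simpa using hp m (Nat.zero_le m)
    simp [this]
  | succ n ih =>
    intro p hp
    have h := ih _ (degree_sub_smul_lt hp (hB n))
    rw [map_sub, map_smul, hT] at h
    rw [degree_lt_iff_coeff_zero] at h ⊢
    intro m hm
    have h1 := h m (by omega)
    have h2 : (B n).coeff m = 0 :=
      coeff_eq_zero_of_degree_lt (by rw [hB]; exact_mod_cast hm)
    simpa [h2] using h1

/-- Eigenvalues of a diagonal differential operator are independent of the choice of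
simple basis of eigenvectors. -/
theorem stmt_15 (T : Polynomial ℝ →ₗ[ℝ] Polynomial ℝ)
    (B B' : ℕ → Polynomial ℝ)
    (hB : ∀ n : ℕ, (B n).degree = n) (hB' : ∀ n : ℕ, (B' n).degree = n)
    (a a' : ℕ → ℝ)
    (hT : ∀ n : ℕ, T (B n) = a n • B n) (hT' : ∀ n : ℕ, T (B' n) = a' n • B' n) :
    ∀ n : ℕ, a n = a' n := by
  intro n
  have hlt : (B' n).degree < (n + 1 : ℕ) := by rw [hB']; exact_mod_cast n.lt_succ_self
  have h := degree_map_lt T B hB a hT n _ (degree_sub_smul_lt hlt (hB n))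
  have hb := coeff_ne_zero_of_degree_eq (hB n)
  have hb' := coeff_ne_zero_of_degree_eq (hB' n)
  rw [map_sub, map_smul, hT, hT', degree_lt_iff_coeff_zero] at h
  have h1 := h n le_rfl
  simp only [coeff_sub, coeff_smul, smul_eq_mul] at h1
  field_simp at h1
  exact (sub_eq_zero.mp ((mul_eq_zero.mp h1).resolve_left hb')).symm
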